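/- arXiv:1805.11870 — 3 statements merged into one kernel-verified Lean document; each statement's English description precedes it below -/
import Mathlib

section
/- Let s* > 2 (in the paper s* = 2* := 2N/(N−2)) and let f ∈ C¹(ℝ) satisfy f(0) = 0 and |f'(s)| ≤ A₁|s|^{s*−2} for all s ∈ ℝ. Then for every τ > 1 there exists C > 0 such that |t f(u) − f(t u)| ≤ C |u|^{s*−1} |t − 1| for all u ∈ ℝ and all t ∈ [0, τ]. -/
/-!
Write `t f(u) - f(tu) = (t - 1) f(u) + (f(u) - f(tu))`. The growth bound on the derivative makes
`f` Lipschitz with constant `A Rᵖ` on the closed ball of radius `R`. The segment from `0` to `u`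
(with `R = ‖u‖`) controls the first term and the segment from `tu` to `u` (with `R = τ ‖u‖`)
controls the second; both come with the factor `|t - 1|`.
-/

section PowerGrowth

variable {E F : Type*} [NormedAddCommGroup E] [NormedSpace ℝ E]
  [NormedAddCommGroup F] [NormedSpace ℝ F] {f : E → F} {A p : ℝ}

theorem norm_image_sub_le_of_norm_fderiv_le_rpow (hp : 0 ≤ p) (hA : 0 ≤ A)
    (hf : Differentiable ℝ f) (hd : ∀ x, ‖fderiv ℝ f x‖ ≤ A * ‖x‖ ^ p)
    {R : ℝ} {x y : E} (hx : ‖x‖ ≤ R) (hy : ‖y‖ ≤ R) :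
    ‖f y - f x‖ ≤ A * R ^ p * ‖y - x‖ := by
  have bound : ∀ z ∈ Metric.closedBall (0 : E) R, ‖fderiv ℝ f z‖ ≤ A * R ^ p := fun z hz ↦
    calc ‖fderiv ℝ f z‖ ≤ A * ‖z‖ ^ p := hd z
      _ ≤ A * R ^ p := by gcongr; exact mem_closedBall_zero_iff.mp hz
  exact (convex_closedBall 0 R).norm_image_sub_le_of_norm_fderiv_le (fun z _ ↦ hf z) bound
    (mem_closedBall_zero_iff.mpr hx) (mem_closedBall_zero_iff.mpr hy)

theorem norm_image_le_of_norm_fderiv_le_rpow (hp : 0 ≤ p) (hA : 0 ≤ A)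
    (hf : Differentiable ℝ f) (hf0 : f 0 = 0) (hd : ∀ x, ‖fderiv ℝ f x‖ ≤ A * ‖x‖ ^ p) (u : E) :
    ‖f u‖ ≤ A * ‖u‖ ^ (p + 1) := by
  have h := norm_image_sub_le_of_norm_fderiv_le_rpow hp hA hf hd
    (norm_zero.trans_le (norm_nonneg u)) le_rfl
  rwa [hf0, sub_zero, sub_zero, mul_assoc,
    ← Real.rpow_add_one' (norm_nonneg u) (by positivity)] at h

theorem norm_sub_image_smul_le_of_norm_fderiv_le_rpow (hp : 0 ≤ p) (hA : 0 ≤ A)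
    (hf : Differentiable ℝ f) (hd : ∀ x, ‖fderiv ℝ f x‖ ≤ A * ‖x‖ ^ p)
    {τ t : ℝ} (hτ : 1 ≤ τ) (ht : |t| ≤ τ) (u : E) :
    ‖f u - f (t • u)‖ ≤ A * τ ^ p * ‖u‖ ^ (p + 1) * |t - 1| := by
  have htu : ‖t • u‖ ≤ τ * ‖u‖ := by
    rw [norm_smul, Real.norm_eq_abs]
    gcongr
  have hu : ‖u‖ ≤ τ * ‖u‖ := le_mul_of_one_le_left (norm_nonneg u) hτ
  have hsub : ‖u - t • u‖ = |t - 1| * ‖u‖ := by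
    rw [norm_sub_rev, ← Real.norm_eq_abs, ← norm_smul, sub_smul, one_smul]
  calc ‖f u - f (t • u)‖ ≤ A * (τ * ‖u‖) ^ p * ‖u - t • u‖ :=
        norm_image_sub_le_of_norm_fderiv_le_rpow hp hA hf hd htu hu
    _ = A * τ ^ p * ‖u‖ ^ (p + 1) * |t - 1| := by
        rw [hsub, Real.mul_rpow (by positivity) (norm_nonneg u),
          Real.rpow_add_one' (norm_nonneg u) (by positivity)]
        ring

theorem pointwise_homogeneity_estimate_general (hp : 0 ≤ p) (hA : 0 ≤ A)
    (hf : Differentiable ℝ f) (hf0 : f 0 = 0) (hd : ∀ x, ‖fderiv ℝ f x‖ ≤ A * ‖x‖ ^ p)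
    {τ t : ℝ} (hτ : 1 ≤ τ) (ht : |t| ≤ τ) (u : E) :
    ‖t • f u - f (t • u)‖ ≤ A * (1 + τ ^ p) * ‖u‖ ^ (p + 1) * |t - 1| :=
  calc ‖t • f u - f (t • u)‖ = ‖(t - 1) • f u + (f u - f (t • u))‖ := by
        rw [sub_smul, one_smul, sub_add_sub_cancel]
    _ ≤ |t - 1| * ‖f u‖ + ‖f u - f (t • u)‖ := by
        rw [← Real.norm_eq_abs, ← norm_smul]
        exact norm_add_le _ _
    _ ≤ |t - 1| * (A * ‖u‖ ^ (p + 1)) + A * τ ^ p * ‖u‖ ^ (p + 1) * |t - 1| := by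
        gcongr
        · exact norm_image_le_of_norm_fderiv_le_rpow hp hA hf hf0 hd u
        · exact norm_sub_image_smul_le_of_norm_fderiv_le_rpow hp hA hf hd hτ ht u
    _ = A * (1 + τ ^ p) * ‖u‖ ^ (p + 1) * |t - 1| := by ring

end PowerGrowth

/-- **Pointwise estimate in Lemma 4.4.** If `f ∈ C¹(ℝ)`, `f(0) = 0` and
`|f'(s)| ≤ A₁|s|^{s*−2}` with `s* > 2`, then for every `τ > 1` there is `C > 0` with
`|t f(u) − f(tu)| ≤ C |u|^{s*−1} |t−1|` for all `u ∈ ℝ` and `t ∈ [0,τ]`. -/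
theorem pointwise_homogeneity_estimate
    (sstar A₁ : ℝ) (hs : 2 < sstar) (hA₁ : 0 < A₁)
    (f : ℝ → ℝ) (hC1 : ContDiff ℝ 1 f) (hf0 : f 0 = 0)
    (hd : ∀ s : ℝ, |deriv f s| ≤ A₁ * |s| ^ (sstar - 2)) :
    ∀ τ : ℝ, 1 < τ → ∃ C : ℝ, 0 < C ∧
      ∀ u t : ℝ, 0 ≤ t → t ≤ τ → |t * f u - f (t * u)| ≤ C * |u| ^ (sstar - 1) * |t - 1| := by
  refine fun τ hτ ↦ ⟨A₁ * (1 + τ ^ (sstar - 2)), by positivity, fun u t ht0 htτ ↦ ?_⟩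
  simpa only [smul_eq_mul, Real.norm_eq_abs, show sstar - 2 + 1 = sstar - 1 by ring] using
    pointwise_homogeneity_estimate_general (sub_nonneg.mpr hs.le) hA₁.le
      (hC1.differentiable one_ne_zero) hf0 (fun s ↦ norm_deriv_eq_norm_fderiv.symm.trans_le (hd s))
      hτ.le ((abs_of_nonneg ht0).trans_le htτ) u
end

section
/- Let N ≥ 4, 2* := 2N/(N−2), and let f satisfy (f1) and (f2), with F(s) := ∫₀^s f(t) dt. Then for every r > 0, every integer m ≥ 1, and every ν ∈ (0, q−2), there exists a constant C_{r,m,ν} > 0 such that, for any numbers a₁, …, a_m ∈ (0, r], F( Σ_{i=1}^m a_i ) − Σ_{i=1}^m F(a_i) − Σ_{i≠j} f(a_i) a_j ≥ − C_{r,m,ν} Σ_{i≠j} (a_i a_j)^{1 + ν/2}, where the double sums run over ordered pairs (i,j) with 1 ≤ i, j ≤ m and i ≠ j. -/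
/-!
Condition (f2) makes `f s / s` increasing, so `f` is superadditive on `[0, ∞)`. Integrating
`f a + f t ≤ f (a + t)` over `t ∈ [0, b]` gives `F a + F b + f a * b ≤ F (a + b)` without any
error. Now add the numbers in increasing order. Adding the new largest one `x` to the previous ones
`aⱼ ≤ x` pays for the terms `f x * aⱼ`; only the terms `f aⱼ * x`, in which `f` sits at the smaller
argument, are left to the error, and `f s = O(s ^ (1 + ν))` gives
`f aⱼ * x ≤ K * aⱼ ^ (1 + ν) * x ≤ K * (aⱼ * x) ^ (1 + ν / 2)`.
The constant `K` does not depend on the number of summands.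
-/

noncomputable section
open Finset

/-- `F(s) = ∫₀ˢ f(t) dt`. -/
def Fint (f : ℝ → ℝ) (s : ℝ) : ℝ := ∫ t in (0:ℝ)..s, f t

open Asymptotics
open scoped Topology

/-- Superadditivity of a real function on `[0, ∞)`; its values on negative arguments are
irrelevant. -/
def SuperadditiveOnNonneg (f : ℝ → ℝ) : Prop :=
  ∀ ⦃s t : ℝ⦄, 0 ≤ s → 0 ≤ t → f s + f t ≤ f (s + t)

namespace SuperadditiveOnNonneg

variable {f : ℝ → ℝ}

theorem map_zero_nonpos (hf : SuperadditiveOnNonneg f) : f 0 ≤ 0 := by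
  simpa using hf le_rfl le_rfl

theorem monotoneOn (hf : SuperadditiveOnNonneg f) (hnonneg : ∀ s, 0 ≤ s → 0 ≤ f s) :
    MonotoneOn f (Set.Ici 0) := by
  intro s hs t _ hst
  have hadd := hf hs (sub_nonneg.2 hst)
  have hincr := hnonneg (t - s) (sub_nonneg.2 hst)
  rw [add_sub_cancel] at hadd
  linarith

theorem of_monotoneOn_div (h0 : f 0 ≤ 0) (hf : MonotoneOn (fun s ↦ f s / s) (Set.Ioi 0)) :
    SuperadditiveOnNonneg f := by
  intro s t hs ht
  rcases hs.eq_or_lt with rfl | hs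
  · simpa using h0
  rcases ht.eq_or_lt with rfl | ht
  · simpa using h0
  have hst : 0 < s + t := add_pos hs ht
  have hs_le : f s ≤ f (s + t) / (s + t) * s :=
    (div_le_iff₀ hs).1 (hf hs hst (le_add_of_nonneg_right ht.le))
  have ht_le : f t ≤ f (s + t) / (s + t) * t :=
    (div_le_iff₀ ht).1 (hf ht hst (le_add_of_nonneg_left hs.le))
  calc f s + f t ≤ f (s + t) / (s + t) * s + f (s + t) / (s + t) * t := add_le_add hs_le ht_le
    _ = f (s + t) := by field_simp

theorem Fint_add_Fint_add_mul_le (hf : SuperadditiveOnNonneg f) {a b : ℝ} (ha : 0 ≤ a) (hb : 0 ≤ b)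
    (hint : IntervalIntegrable f MeasureTheory.volume 0 (a + b)) :
    Fint f a + Fint f b + f a * b ≤ Fint f (a + b) := by
  have mem_a : a ∈ Set.uIcc 0 (a + b) := Set.mem_uIcc_of_le ha (by linarith)
  have mem_b : b ∈ Set.uIcc 0 (a + b) := Set.mem_uIcc_of_le hb (by linarith)
  have int_a := hint.mono_set (Set.uIcc_subset_uIcc_left mem_a)
  have int_b := hint.mono_set (Set.uIcc_subset_uIcc_left mem_b)
  have int_ab := hint.mono_set (Set.uIcc_subset_uIcc_right mem_a)
  have int_shift : IntervalIntegrable (fun t ↦ f (a + t)) MeasureTheory.volume 0 b := by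
    simpa using int_ab.comp_add_left a
  calc Fint f a + Fint f b + f a * b = Fint f a + ∫ t in (0 : ℝ)..b, (f a + f t) := by
        rw [intervalIntegral.integral_add intervalIntegrable_const int_b,
          intervalIntegral.integral_const]
        simp only [Fint, sub_zero, smul_eq_mul]
        ring
    _ ≤ Fint f a + ∫ t in (0 : ℝ)..b, f (a + t) := by
        gcongr
        exact intervalIntegral.integral_mono_on hb (intervalIntegrable_const.add int_b) int_shift
          fun t ht ↦ hf ha ht.1
    _ = Fint f (a + b) := by
        rw [intervalIntegral.integral_comp_add_left f a, add_zero]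
        exact intervalIntegral.integral_add_adjacent_intervals int_a int_ab

end SuperadditiveOnNonneg

theorem monotoneOn_div_of_le_deriv_mul {f : ℝ → ℝ} (hd : ∀ s, 0 < s → DifferentiableAt ℝ f s)
    (h : ∀ s, 0 < s → f s ≤ deriv f s * s) : MonotoneOn (fun s ↦ f s / s) (Set.Ioi 0) := by
  have hder : ∀ s, 0 < s →
      HasDerivAt (fun s ↦ f s / s) ((deriv f s * s - f s * 1) / s ^ 2) s := fun s hs ↦
    (hd s hs).hasDerivAt.div (hasDerivAt_id s) hs.ne'
  refine monotoneOn_of_hasDerivWithinAt_nonneg (convex_Ioi 0)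
    (fun s hs ↦ (hder s hs).continuousAt.continuousWithinAt)
    (fun s hs ↦ (hder s (interior_subset hs)).hasDerivWithinAt) fun s hs ↦ ?_
  have hs_le := h s (interior_subset hs)
  exact div_nonneg (by linarith) (sq_nonneg s)

theorem isBigO_rpow_nhdsGT_zero_of_abs_le {f : ℝ → ℝ} {A α β : ℝ} (hαβ : α ≤ β)
    (hf : ∀ s, 0 < s → s ≤ 1 → |f s| ≤ A * s ^ β) : f =O[𝓝[>] 0] (· ^ α) := by
  have hfβ : f =O[𝓝[>] 0] (· ^ β) := by
    refine IsBigO.of_bound A ?_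
    filter_upwards [Ioc_mem_nhdsGT one_pos] with s hs
    simpa [abs_of_nonneg (Real.rpow_nonneg hs.1.le β)] using hf s hs.1 hs.2
  refine hfβ.trans (IsBigO.of_bound 1 ?_)
  filter_upwards [Ioc_mem_nhdsGT one_pos] with s hs
  simpa [abs_of_nonneg, Real.rpow_nonneg hs.1.le] using
    Real.rpow_le_rpow_of_exponent_ge hs.1 hs.2 hαβ

theorem exists_le_mul_rpow_of_isBigO {f : ℝ → ℝ} {α : ℝ} (hα : 0 ≤ α) (h0 : f 0 ≤ 0)
    (hmono : MonotoneOn f (Set.Ici 0)) (hO : f =O[𝓝[>] 0] (· ^ α)) (r : ℝ) :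
    ∃ K : ℝ, 0 < K ∧ ∀ s, 0 ≤ s → s ≤ r → f s ≤ K * s ^ α := by
  obtain ⟨c, hc, hbound⟩ := hO.exists_pos
  obtain ⟨δ, (hδ : 0 < δ), hsmall⟩ := mem_nhdsGT_iff_exists_Ioo_subset.1 hbound.bound
  have hδα : 0 < δ ^ α := Real.rpow_pos_of_pos hδ α
  refine ⟨c + |f r| / δ ^ α, by positivity, fun s hs hsr ↦ ?_⟩
  have hsα : 0 ≤ s ^ α := Real.rpow_nonneg hs α
  rcases hs.eq_or_lt with rfl | hs_pos
  · exact h0.trans (by positivity)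
  rcases lt_or_ge s δ with hsδ | hδs
  · have hfs : |f s| ≤ c * s ^ α := by
      simpa [abs_of_nonneg hsα] using hsmall ⟨hs_pos, hsδ⟩
    calc f s ≤ c * s ^ α := (le_abs_self _).trans hfs
      _ ≤ (c + |f r| / δ ^ α) * s ^ α := by gcongr; exact le_add_of_nonneg_right (by positivity)
  · calc f s ≤ |f r| := (hmono hs (hs.trans hsr) hsr).trans (le_abs_self _)
      _ = |f r| / δ ^ α * δ ^ α := (div_mul_cancel₀ _ hδα.ne').symm
      _ ≤ |f r| / δ ^ α * s ^ α := by gcongr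
      _ ≤ (c + |f r| / δ ^ α) * s ^ α := by gcongr; exact le_add_of_nonneg_left hc.le

theorem rpow_one_add_mul_le_mul_rpow {x y ν : ℝ} (hx : 0 ≤ x) (hxy : x ≤ y) (hν : 0 ≤ ν) :
    x ^ (1 + ν) * y ≤ (x * y) ^ (1 + ν / 2) := by
  have hy : 0 ≤ y := hx.trans hxy
  have hν₂ : 0 ≤ ν / 2 := by positivity
  calc x ^ (1 + ν) * y = x ^ (1 + ν / 2) * (x ^ (ν / 2) * y) := by
        rw [← mul_assoc, ← Real.rpow_add_of_nonneg hx (by positivity) hν₂]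
        ring_nf
    _ ≤ x ^ (1 + ν / 2) * (y ^ (ν / 2) * y) := by gcongr
    _ = (x * y) ^ (1 + ν / 2) := by
        rw [Real.mul_rpow hx hy, Real.rpow_add_of_nonneg hy zero_le_one hν₂, Real.rpow_one,
          mul_comm y]

theorem sum_offDiag_insert {ι M : Type*} [DecidableEq ι] [AddCommMonoid M] {s : Finset ι} {x : ι}
    (hx : x ∉ s) (g : ι × ι → M) :
    ∑ ij ∈ (insert x s).offDiag, g ij =
      ∑ ij ∈ s.offDiag, g ij + ∑ j ∈ s, g (x, j) + ∑ j ∈ s, g (j, x) := by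
  have hdisj_row : Disjoint s.offDiag ({x} ×ˢ s) := by
    grind [Finset.disjoint_left]
  have hdisj_col : Disjoint (s.offDiag ∪ {x} ×ˢ s) (s ×ˢ {x}) := by
    grind [Finset.disjoint_left]
  rw [offDiag_insert hx, sum_union hdisj_col, sum_union hdisj_row]
  simp

theorem sum_add_sum_offDiag_mul_le {ι : Type*} {F f : ℝ → ℝ} {a : ι → ℝ}
    {e : ι → ι → ℝ} (s : Finset ι) (hF0 : 0 ≤ F 0)
    (hF : ∀ x y, 0 ≤ x → 0 ≤ y → F x + F y + f x * y ≤ F (x + y))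
    (ha : ∀ i ∈ s, 0 ≤ a i) (he : ∀ i ∈ s, ∀ j ∈ s, 0 ≤ e i j)
    (hfe : ∀ i ∈ s, ∀ j ∈ s, a i ≤ a j → f (a i) * a j ≤ e i j) :
    ∑ i ∈ s, F (a i) + ∑ ij ∈ s.offDiag, f (a ij.1) * a ij.2 ≤
      F (∑ i ∈ s, a i) + ∑ ij ∈ s.offDiag, e ij.1 ij.2 := by
  classical
  induction s using Finset.induction_on_max_value a with
  | empty => simpa using hF0
  | insert x s hx hmax ih =>
    have mem_x : x ∈ insert x s := mem_insert_self x s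
    have mem_of : ∀ j ∈ s, j ∈ insert x s := fun j hj ↦ mem_insert_of_mem hj
    have hsum_nonneg : 0 ≤ ∑ i ∈ s, a i := sum_nonneg fun j hj ↦ ha j (mem_of j hj)
    have ih := ih (fun i hi ↦ ha i (mem_of i hi))
      (fun i hi j hj ↦ he i (mem_of i hi) j (mem_of j hj))
      (fun i hi j hj ↦ hfe i (mem_of i hi) j (mem_of j hj))
    have hrow : F (a x) + F (∑ i ∈ s, a i) + ∑ j ∈ s, f (a x) * a j ≤ F (a x + ∑ i ∈ s, a i) := by
      simpa only [mul_sum] using hF (a x) _ (ha x mem_x) hsum_nonneg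
    have hcol : ∑ j ∈ s, f (a j) * a x ≤ ∑ j ∈ s, e j x :=
      sum_le_sum fun j hj ↦ hfe j (mem_of j hj) x mem_x (hmax j hj)
    have herr : 0 ≤ ∑ j ∈ s, e x j := sum_nonneg fun j hj ↦ he x mem_x j (mem_of j hj)
    rw [sum_offDiag_insert hx, sum_offDiag_insert hx, sum_insert hx, sum_insert hx]
    linarith

theorem superadditivity_with_error_general {ι : Type*} {f : ℝ → ℝ} {ν : ℝ}
    (hf : SuperadditiveOnNonneg f) (hnonneg : ∀ s, 0 ≤ s → 0 ≤ f s) (hν : 0 ≤ ν)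
    (hO : f =O[𝓝[>] 0] (· ^ (1 + ν))) (r : ℝ) :
    ∃ C : ℝ, 0 < C ∧ ∀ (s : Finset ι) (a : ι → ℝ), (∀ i ∈ s, 0 ≤ a i ∧ a i ≤ r) →
      Fint f (∑ i ∈ s, a i) - (∑ i ∈ s, Fint f (a i)) -
          (∑ ij ∈ s.offDiag, f (a ij.1) * a ij.2) ≥
        -C * ∑ ij ∈ s.offDiag, (a ij.1 * a ij.2) ^ (1 + ν / 2) := by
  have hmono := hf.monotoneOn hnonneg
  obtain ⟨K, hK, hgrowth⟩ :=
    exists_le_mul_rpow_of_isBigO (by positivity) hf.map_zero_nonpos hmono hO r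
  have hFint : ∀ x y, 0 ≤ x → 0 ≤ y → Fint f x + Fint f y + f x * y ≤ Fint f (x + y) := by
    intro x y hx hy
    refine hf.Fint_add_Fint_add_mul_le hx hy (hmono.mono ?_).intervalIntegrable
    exact Set.uIcc_of_le (add_nonneg hx hy) ▸ Set.Icc_subset_Ici_self
  refine ⟨K, hK, fun s a ha ↦ ?_⟩
  have hcross : ∀ i ∈ s, ∀ j ∈ s, a i ≤ a j →
      f (a i) * a j ≤ K * (a i * a j) ^ (1 + ν / 2) := fun i hi j hj hij ↦
    calc f (a i) * a j ≤ K * a i ^ (1 + ν) * a j :=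
          mul_le_mul_of_nonneg_right (hgrowth _ (ha i hi).1 (ha i hi).2) (ha j hj).1
      _ = K * (a i ^ (1 + ν) * a j) := mul_assoc ..
      _ ≤ K * (a i * a j) ^ (1 + ν / 2) := by
          gcongr; exact rpow_one_add_mul_le_mul_rpow (ha i hi).1 hij hν
  have herr : ∀ i ∈ s, ∀ j ∈ s, 0 ≤ K * (a i * a j) ^ (1 + ν / 2) := fun i hi j hj ↦
    mul_nonneg hK.le (Real.rpow_nonneg (mul_nonneg (ha i hi).1 (ha j hj).1) _)
  have hsum := sum_add_sum_offDiag_mul_le s (by simp [Fint]) hFint (fun i hi ↦ (ha i hi).1)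
    herr hcross
  rw [← mul_sum] at hsum
  linarith

/-- **Lemma 4.7.** Under (f1)–(f2), for every `r > 0`, `m ≥ 1` and `ν ∈ (0, q−2)` there is
`C > 0` such that for all `a₁, …, a_m ∈ (0, r]`,
`F(Σ aᵢ) − Σ F(aᵢ) − Σ_{i≠j} f(aᵢ)aⱼ ≥ −C Σ_{i≠j} (aᵢaⱼ)^{1+ν/2}`. Here `N = M + 2 ≥ 4`. -/
theorem superadditivity_with_error
    (M : ℕ) (hM : 2 ≤ M)
    (f : ℝ → ℝ) (hodd : ∀ s : ℝ, f (-s) = - f s) (hC1 : ContDiff ℝ 1 f)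
    (A₁ p q θ : ℝ) (hA₁ : 0 < A₁) (hp : 2 < p)
    (hpS : p < 2 * ((M : ℝ) + 2) / M) (hqS : 2 * ((M : ℝ) + 2) / M < q)
    (hf1a : ∀ s : ℝ, 1 ≤ |s| →
      |Fint f s| ≤ A₁ * |s| ^ p ∧ |f s| ≤ A₁ * |s| ^ (p - 1) ∧ |deriv f s| ≤ A₁ * |s| ^ (p - 2))
    (hf1b : ∀ s : ℝ, |s| ≤ 1 →
      |Fint f s| ≤ A₁ * |s| ^ q ∧ |f s| ≤ A₁ * |s| ^ (q - 1) ∧ |deriv f s| ≤ A₁ * |s| ^ (q - 2))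
    (hθ : 2 < θ)
    (hf2 : ∀ s : ℝ, 0 < s →
      0 ≤ θ * Fint f s ∧ θ * Fint f s ≤ f s * s ∧ f s * s < deriv f s * s ^ 2) :
    ∀ r : ℝ, 0 < r → ∀ m : ℕ, 1 ≤ m → ∀ ν : ℝ, 0 < ν → ν < q - 2 →
      ∃ C : ℝ, 0 < C ∧ ∀ a : Fin m → ℝ, (∀ i, 0 < a i ∧ a i ≤ r) →
        Fint f (∑ i, a i) - (∑ i, Fint f (a i)) -
            (∑ ij ∈ Finset.univ.offDiag, f (a ij.1) * a ij.2) ≥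
          -C * ∑ ij ∈ Finset.univ.offDiag, (a ij.1 * a ij.2) ^ (1 + ν / 2) := by
  intro r _ m _ ν hν hνq
  have h0 : f 0 = 0 := by simpa [self_eq_neg] using hodd 0
  have hnonneg : ∀ s, 0 ≤ s → 0 ≤ f s := by
    intro s hs
    rcases hs.eq_or_lt with rfl | hs
    · exact h0.ge
    · exact nonneg_of_mul_nonneg_left ((hf2 s hs).1.trans (hf2 s hs).2.1) hs
  have hderiv : ∀ s, 0 < s → f s ≤ deriv f s * s := fun s hs ↦
    le_of_mul_le_mul_right (by linarith [(hf2 s hs).2.2]) hs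
  have hsuper : SuperadditiveOnNonneg f := .of_monotoneOn_div h0.le <|
    monotoneOn_div_of_le_deriv_mul (fun _ _ ↦ hC1.differentiable one_ne_zero _) hderiv
  have hO : f =O[𝓝[>] 0] (· ^ (1 + ν)) :=
    isBigO_rpow_nhdsGT_zero_of_abs_le (A := A₁) (β := q - 1) (by linarith) fun s hs hs1 ↦ by
      simpa only [abs_of_pos hs] using (hf1b s ((abs_of_pos hs).trans_le hs1)).2.1
  obtain ⟨C, hC, hsum⟩ :=
    superadditivity_with_error_general (ι := Fin m) hsuper hnonneg hν.le hO r
  exact ⟨C, hC, fun a ha ↦ hsum univ a fun i _ ↦ ⟨(ha i).1.le, (ha i).2⟩⟩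
end
end

section
/- Let N ≥ 3, 2* := 2N/(N−2), and let f ∈ C¹(ℝ) satisfy f(0) = 0 and |f'(s)| ≤ A₁|s|^{2*−2} for all s ∈ ℝ. Let u_k, u: ℝ^N → ℝ be measurable functions such that u_k → u almost everywhere on ℝ^N and sup_k ∫_{ℝ^N}|u_k|^{2*} < ∞. Then ∫_{ℝ^N} f(u_k) u_k − ∫_{ℝ^N} f(u_k − u)(u_k − u) → ∫_{ℝ^N} f(u) u as k → ∞ (all the integrals being finite). -/
noncomputable section
open MeasureTheory Filter ENNReal

/-!
Let `g s = f s * s` and `u k = w k + v`, so that the functions `w k` stay bounded in `L^p` and tend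
to `0` almost everywhere. The remainder `R k = g (w k + v) - g (w k) - g v` also tends to `0` almost
everywhere, but it need not have an integrable majorant: the growth of `g` only bounds it by
`ε ‖w k‖ ^ p + D ‖v‖ ^ p`. Truncating repairs this: the excess of `‖R k‖` over `ε ‖w k‖ ^ p` is
dominated by a multiple of `‖v‖ ^ p`, so its integral tends to `0`, while the integral of the part
cut off is at most `ε` times a bound that does not depend on `k`. Thus `R k` tends to `0` in `L¹`.
-/

open scoped NNReal Topology

theorem exists_mul_add_rpow_mul_le (K : ℝ≥0) {q : ℝ} (hq : 0 ≤ q) {ε : ℝ≥0} (hε : 0 < ε) :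
    ∃ D : ℝ≥0, ∀ x y : ℝ≥0, K * (x + y) ^ q * y ≤ ε * x ^ (q + 1) + D * y ^ (q + 1) := by
  obtain ⟨δ, hδε, hδ⟩ : ∃ δ : ℝ≥0, K * (1 + δ) ^ q * δ < ε ∧ 0 < δ := by
    have hcont : Continuous fun δ : ℝ≥0 => K * (1 + δ) ^ q * δ := by
      have := NNReal.continuous_rpow_const hq
      fun_prop
    have hsmall : ∀ᶠ δ in 𝓝[>] (0 : ℝ≥0), K * (1 + δ) ^ q * δ < ε :=
      nhdsWithin_le_nhds ((hcont.tendsto' 0 0 (by simp)).eventually_lt_const hε)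
    exact (hsmall.and self_mem_nhdsWithin).exists
  have hpow (c r : ℝ≥0) : (c * r) ^ q * r = c ^ q * r ^ (q + 1) := by
    rw [NNReal.mul_rpow, NNReal.rpow_add_one' (by positivity), mul_assoc]
  refine ⟨K * (1 + δ⁻¹) ^ q, fun x y => ?_⟩
  rcases le_total y (δ * x) with hy | hx
  · refine le_add_right ?_
    calc K * (x + y) ^ q * y ≤ K * (x + δ * x) ^ q * (δ * x) := by gcongr
      _ = K * δ * (((1 + δ) * x) ^ q * x) := by ring_nf
      _ = K * (1 + δ) ^ q * δ * x ^ (q + 1) := by rw [hpow]; ring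
      _ ≤ ε * x ^ (q + 1) := by gcongr
  · refine le_add_left ?_
    have hxy : x ≤ δ⁻¹ * y := (le_inv_mul_iff₀ hδ).2 hx
    calc K * (x + y) ^ q * y ≤ K * (δ⁻¹ * y + y) ^ q * y := by gcongr
      _ = K * (((1 + δ⁻¹) * y) ^ q * y) := by ring_nf
      _ = K * (1 + δ⁻¹) ^ q * y ^ (q + 1) := by rw [hpow]; ring

/-- The hypothesis of Brezis and Lieb on a nonlinearity `g` of order `p`: it vanishes at `0`, and
moving the argument from `w` to `w + v` costs at most a small multiple of `‖w‖ ^ p` plus a large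
multiple of `‖v‖ ^ p`. The exponent is an `ℝ≥0` so that it also serves as an exponent of
`eLpNorm`; extended norms let the bound be integrated without integrability side conditions. -/
structure BrezisLiebGrowth {E F : Type*} [NormedAddCommGroup E] [NormedAddCommGroup F]
    (p : ℝ≥0) (g : E → F) : Prop where
  map_zero : g 0 = 0
  exists_enorm_sub_le : ∀ ε : ℝ≥0, 0 < ε → ∃ D : ℝ≥0, ∀ w v : E,
    ‖g (w + v) - g w‖ₑ ≤ ε * ‖w‖ₑ ^ (p : ℝ) + D * ‖v‖ₑ ^ (p : ℝ)

/-- `g` is locally Lipschitz, with a constant on the ball of radius `r` about `0` that grows at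
most like `K * r ^ q`. This is the integrated form of the derivative bound `‖g' x‖ ≤ K * ‖x‖ ^ q`;
unlike that bound, it passes easily to products. -/
def LipschitzWithPowerGrowth {E F : Type*} [NormedAddCommGroup E] [NormedAddCommGroup F]
    (K q : ℝ≥0) (g : E → F) : Prop :=
  ∀ a b : E, ‖g a - g b‖₊ ≤ K * max ‖a‖₊ ‖b‖₊ ^ (q : ℝ) * ‖a - b‖₊

namespace LipschitzWithPowerGrowth

theorem of_norm_fderiv_le {E F : Type*} [NormedAddCommGroup E] [NormedSpace ℝ E]
    [NormedAddCommGroup F] [NormedSpace ℝ F] {K q : ℝ≥0} {f : E → F} (hf : Differentiable ℝ f)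
    (hbound : ∀ x, ‖fderiv ℝ f x‖ ≤ K * ‖x‖ ^ (q : ℝ)) : LipschitzWithPowerGrowth K q f := by
  intro a b
  set r := max ‖a‖ ‖b‖ with hr
  have hbound_ball : ∀ x ∈ Metric.closedBall (0 : E) r, ‖fderiv ℝ f x‖ ≤ K * r ^ (q : ℝ) := by
    intro x hx
    have hxr : ‖x‖ ≤ r := mem_closedBall_zero_iff.1 hx
    exact (hbound x).trans (by gcongr)
  have hsub : ‖f a - f b‖ ≤ K * r ^ (q : ℝ) * ‖a - b‖ :=
    (convex_closedBall 0 r).norm_image_sub_le_of_norm_fderiv_le (fun x _ => hf x) hbound_ball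
      (mem_closedBall_zero_iff.2 (le_max_right _ _)) (mem_closedBall_zero_iff.2 (le_max_left _ _))
  rw [← NNReal.coe_le_coe]
  simpa [hr] using hsub

theorem mul_self {R : Type*} [NonUnitalNormedRing R] {K q : ℝ≥0} {f : R → R}
    (hf : LipschitzWithPowerGrowth K q f) (hf0 : f 0 = 0) :
    LipschitzWithPowerGrowth (2 * K) (q + 1) fun x => f x * x := by
  intro a b
  set m := max ‖a‖₊ ‖b‖₊
  have hfb : ‖f b‖₊ ≤ K * m ^ (q : ℝ) * m := by
    have hb : ‖f b‖₊ ≤ K * ‖b‖₊ ^ (q : ℝ) * ‖b‖₊ := by simpa [hf0] using hf b 0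
    have hbm : ‖b‖₊ ≤ m := le_max_right _ _
    exact hb.trans (by gcongr)
  calc ‖f a * a - f b * b‖₊ = ‖(f a - f b) * a + f b * (a - b)‖₊ := by
        congr 1; noncomm_ring
    _ ≤ ‖f a - f b‖₊ * ‖a‖₊ + ‖f b‖₊ * ‖a - b‖₊ :=
        (nnnorm_add_le _ _).trans (add_le_add (nnnorm_mul_le _ _) (nnnorm_mul_le _ _))
    _ ≤ K * m ^ (q : ℝ) * ‖a - b‖₊ * m + K * m ^ (q : ℝ) * m * ‖a - b‖₊ := by
        gcongr
        · exact hf a b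
        · exact le_max_left _ _
    _ = 2 * K * m ^ ((q + 1 : ℝ≥0) : ℝ) * ‖a - b‖₊ := by
        rw [NNReal.coe_add, NNReal.coe_one, NNReal.rpow_add_one' (by positivity)]
        ring

theorem brezisLiebGrowth {E F : Type*} [NormedAddCommGroup E] [NormedAddCommGroup F] {K q : ℝ≥0}
    {g : E → F} (hg : LipschitzWithPowerGrowth K q g) (hg0 : g 0 = 0) :
    BrezisLiebGrowth (q + 1) g := by
  refine ⟨hg0, fun ε hε => ?_⟩
  obtain ⟨D, hD⟩ := exists_mul_add_rpow_mul_le K q.coe_nonneg hε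
  refine ⟨D, fun w v => ?_⟩
  have hmax : max ‖w + v‖₊ ‖w‖₊ ≤ ‖w‖₊ + ‖v‖₊ := max_le (nnnorm_add_le w v) le_self_add
  have hsplit : ‖g (w + v) - g w‖₊ ≤
      ε * ‖w‖₊ ^ ((q + 1 : ℝ≥0) : ℝ) + D * ‖v‖₊ ^ ((q + 1 : ℝ≥0) : ℝ) := by
    calc ‖g (w + v) - g w‖₊ ≤ K * max ‖w + v‖₊ ‖w‖₊ ^ (q : ℝ) * ‖v‖₊ := by
          simpa using hg (w + v) w
      _ ≤ K * (‖w‖₊ + ‖v‖₊) ^ (q : ℝ) * ‖v‖₊ := by gcongr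
      _ ≤ _ := hD ‖w‖₊ ‖v‖₊
  simp only [enorm_eq_nnnorm, ← ENNReal.coe_rpow_of_nonneg _ (q + 1).coe_nonneg]
  exact_mod_cast hsplit

end LipschitzWithPowerGrowth

theorem eLpNorm_nnreal_eq_lintegral_ofReal {α E : Type*} [MeasurableSpace α]
    [NormedAddCommGroup E] {μ : Measure α} {p : ℝ≥0} (hp : p ≠ 0) (u : α → E) :
    eLpNorm u p μ = (∫⁻ x, ENNReal.ofReal (‖u x‖ ^ (p : ℝ)) ∂μ) ^ (1 / (p : ℝ)) := by
  simp only [eLpNorm_nnreal_eq_lintegral hp, ← ofReal_norm,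
    ENNReal.ofReal_rpow_of_nonneg (norm_nonneg _) p.coe_nonneg]

namespace BrezisLiebGrowth

variable {α E F ι : Type*} [MeasurableSpace α] [NormedAddCommGroup E] [NormedAddCommGroup F]
  {μ : Measure α} {l : Filter ι} {p : ℝ≥0} {g : E → F} {v : α → E} {C : ℝ≥0∞}

theorem exists_enorm_le (hg : BrezisLiebGrowth p g) (hp : p ≠ 0) :
    ∃ D : ℝ≥0, ∀ v : E, ‖g v‖ₑ ≤ D * ‖v‖ₑ ^ (p : ℝ) := by
  obtain ⟨D, hD⟩ := hg.exists_enorm_sub_le 1 one_pos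
  refine ⟨D, fun v => ?_⟩
  simpa [hg.map_zero, NNReal.coe_pos.2 hp.bot_lt] using hD 0 v

theorem continuous (hg : BrezisLiebGrowth p g) (hp : p ≠ 0) : Continuous g := by
  refine continuous_iff_continuousAt.2 fun w => EMetric.tendsto_nhds.2 fun η hη => ?_
  obtain ⟨ε, hε, hεη⟩ : ∃ ε : ℝ≥0, 0 < ε ∧ ε * ‖w‖ₑ ^ (p : ℝ) < η :=
    ENNReal.exists_nnreal_pos_mul_lt (by simp) hη.ne'
  obtain ⟨D, hD⟩ := hg.exists_enorm_sub_le ε hε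
  have hlim : Tendsto (fun x => ε * ‖w‖ₑ ^ (p : ℝ) + D * ‖x - w‖ₑ ^ (p : ℝ)) (𝓝 w)
      (𝓝 (ε * ‖w‖ₑ ^ (p : ℝ))) := by
    have hsub : Tendsto (fun x => ‖x - w‖ₑ ^ (p : ℝ)) (𝓝 w) (𝓝 0) :=
      Continuous.tendsto' (by fun_prop) _ _ (by simp [NNReal.coe_pos.2 hp.bot_lt])
    simpa using tendsto_const_nhds.add (ENNReal.Tendsto.const_mul hsub (.inr coe_ne_top))
  filter_upwards [hlim.eventually_lt_const hεη] with x hx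
  rw [edist_eq_enorm_sub]
  simpa using (hD w (x - w)).trans_lt (by simpa using hx)

theorem integrable_comp (hg : BrezisLiebGrowth p g) (hp : p ≠ 0) {u : α → E}
    (hu : MemLp u p μ) : Integrable (fun x => g (u x)) μ := by
  obtain ⟨D, hD⟩ := hg.exists_enorm_le hp
  refine ⟨(hg.continuous hp).comp_aestronglyMeasurable hu.aestronglyMeasurable, ?_⟩
  calc ∫⁻ x, ‖g (u x)‖ₑ ∂μ ≤ ∫⁻ x, D * ‖u x‖ₑ ^ (p : ℝ) ∂μ := lintegral_mono fun x => hD (u x)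
    _ = D * eLpNorm u p μ ^ (p : ℝ) := by
        rw [lintegral_const_mul' _ _ coe_ne_top, eLpNorm_nnreal_pow_eq_lintegral hp]
    _ < ∞ := mul_lt_top coe_lt_top (rpow_lt_top_of_nonneg p.coe_nonneg hu.eLpNorm_ne_top)

theorem tendsto_enorm_remainder (hg : BrezisLiebGrowth p g) (hp : p ≠ 0) {w : ι → E}
    (hw : Tendsto w l (𝓝 0)) (v : E) :
    Tendsto (fun k => ‖g (w k + v) - g (w k) - g v‖ₑ) l (𝓝 0) := by
  have hcont := hg.continuous hp
  have hremainder : Continuous fun y => ‖g (y + v) - g y - g v‖ₑ := by fun_prop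
  exact (hremainder.tendsto' 0 0 (by simp [hg.map_zero])).comp hw

theorem exists_enorm_remainder_tsub_le (hg : BrezisLiebGrowth p g) (hp : p ≠ 0) {ε : ℝ≥0}
    (hε : 0 < ε) : ∃ D : ℝ≥0, ∀ w v : E,
      ‖g (w + v) - g w - g v‖ₑ - ε * ‖w‖ₑ ^ (p : ℝ) ≤ D * ‖v‖ₑ ^ (p : ℝ) := by
  obtain ⟨D₁, hD₁⟩ := hg.exists_enorm_sub_le ε hε
  obtain ⟨D₂, hD₂⟩ := hg.exists_enorm_le hp
  refine ⟨D₁ + D₂, fun w v => tsub_le_iff_left.2 ?_⟩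
  calc ‖g (w + v) - g w - g v‖ₑ ≤ ‖g (w + v) - g w‖ₑ + ‖g v‖ₑ := enorm_sub_le
    _ ≤ ε * ‖w‖ₑ ^ (p : ℝ) + D₁ * ‖v‖ₑ ^ (p : ℝ) + D₂ * ‖v‖ₑ ^ (p : ℝ) :=
        add_le_add (hD₁ w v) (hD₂ v)
    _ = ε * ‖w‖ₑ ^ (p : ℝ) + ((D₁ + D₂ : ℝ≥0) : ℝ≥0∞) * ‖v‖ₑ ^ (p : ℝ) := by
        rw [ENNReal.coe_add]; ring

variable [l.IsCountablyGenerated]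

theorem tendsto_lintegral_enorm_remainder_tsub (hg : BrezisLiebGrowth p g) (hp : p ≠ 0)
    {w : ι → α → E} (hw : ∀ k, AEStronglyMeasurable (w k) μ) (hv : MemLp v p μ)
    (hlim : ∀ᵐ x ∂μ, Tendsto (fun k => w k x) l (𝓝 0)) {ε : ℝ≥0} (hε : 0 < ε) :
    Tendsto (fun k => ∫⁻ x, (‖g (w k x + v x) - g (w k x) - g (v x)‖ₑ -
      ε * ‖w k x‖ₑ ^ (p : ℝ)) ∂μ) l (𝓝 0) := by
  obtain ⟨D, hD⟩ := hg.exists_enorm_remainder_tsub_le hp hε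
  have hcomp {y : α → E} (hy : AEStronglyMeasurable y μ) :
      AEStronglyMeasurable (fun x => g (y x)) μ := (hg.continuous hp).comp_aestronglyMeasurable hy
  have hfin : ∫⁻ x, D * ‖v x‖ₑ ^ (p : ℝ) ∂μ ≠ ∞ := by
    rw [lintegral_const_mul' _ _ coe_ne_top, ← eLpNorm_nnreal_pow_eq_lintegral hp]
    exact mul_ne_top coe_ne_top (rpow_ne_top_of_nonneg p.coe_nonneg hv.eLpNorm_ne_top)
  rw [← lintegral_zero (μ := μ)]
  refine tendsto_lintegral_filter_of_dominated_convergence' (fun x => D * ‖v x‖ₑ ^ (p : ℝ))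
    (.of_forall fun k => ?_) (.of_forall fun k => .of_forall fun x => hD (w k x) (v x)) hfin ?_
  · have hremainder := ((hcomp ((hw k).add hv.1)).sub (hcomp (hw k))).sub (hcomp hv.1)
    exact hremainder.enorm.sub (((hw k).enorm.pow_const _).const_mul _)
  · filter_upwards [hlim] with x hx
    exact tendsto_of_tendsto_of_tendsto_of_le_of_le tendsto_const_nhds
      (hg.tendsto_enorm_remainder hp hx (v x)) (fun _ => zero_le) (fun _ => tsub_le_self)

theorem tendsto_lintegral_enorm_remainder (hg : BrezisLiebGrowth p g) (hp : p ≠ 0)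
    {w : ι → α → E} (hw : ∀ k, AEStronglyMeasurable (w k) μ) (hC : C ≠ ∞)
    (hbound : ∀ k, eLpNorm (w k) p μ ≤ C) (hv : MemLp v p μ)
    (hlim : ∀ᵐ x ∂μ, Tendsto (fun k => w k x) l (𝓝 0)) :
    Tendsto (fun k => ∫⁻ x, ‖g (w k x + v x) - g (w k x) - g (v x)‖ₑ ∂μ) l (𝓝 0) := by
  refine ENNReal.tendsto_nhds_zero.2 fun η hη => ?_
  obtain ⟨ε, hε, hεη⟩ : ∃ ε : ℝ≥0, 0 < ε ∧ ε * C ^ (p : ℝ) < η :=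
    ENNReal.exists_nnreal_pos_mul_lt (rpow_ne_top_of_nonneg p.coe_nonneg hC) hη.ne'
  have hexcess := (hg.tendsto_lintegral_enorm_remainder_tsub hp hw hv hlim hε).add_const
    (ε * C ^ (p : ℝ))
  rw [zero_add] at hexcess
  filter_upwards [hexcess.eventually_lt_const hεη] with k hk
  set R := fun x => ‖g (w k x + v x) - g (w k x) - g (v x)‖ₑ
  calc ∫⁻ x, R x ∂μ
      ≤ ∫⁻ x, (R x - ε * ‖w k x‖ₑ ^ (p : ℝ)) + ε * ‖w k x‖ₑ ^ (p : ℝ) ∂μ :=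
        lintegral_mono fun x => le_tsub_add
    _ = ∫⁻ x, (R x - ε * ‖w k x‖ₑ ^ (p : ℝ)) ∂μ + ε * eLpNorm (w k) p μ ^ (p : ℝ) := by
        rw [lintegral_add_right' _ (((hw k).enorm.pow_const _).const_mul _),
          lintegral_const_mul' _ _ coe_ne_top, eLpNorm_nnreal_pow_eq_lintegral hp]
    _ ≤ ∫⁻ x, (R x - ε * ‖w k x‖ₑ ^ (p : ℝ)) ∂μ + ε * C ^ (p : ℝ) := by
        gcongr
        exact hbound k
    _ ≤ η := hk.le

theorem tendsto_integral_comp_sub [NormedSpace ℝ F] (hg : BrezisLiebGrowth p g) (hp : p ≠ 0)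
    {u : ι → α → E} (hu : ∀ k, AEStronglyMeasurable (u k) μ) (hC : C ≠ ∞)
    (hbound : ∀ k, eLpNorm (u k) p μ ≤ C) (hv : MemLp v p μ)
    (hlim : ∀ᵐ x ∂μ, Tendsto (fun k => u k x) l (𝓝 (v x))) :
    Tendsto (fun k => ∫ x, g (u k x) ∂μ - ∫ x, g (u k x - v x) ∂μ) l (𝓝 (∫ x, g (v x) ∂μ)) := by
  have hu_mem (k : ι) : MemLp (u k) p μ := ⟨hu k, (hbound k).trans_lt hC.lt_top⟩
  have hgu (k : ι) := hg.integrable_comp hp (hu_mem k)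
  have hgw (k : ι) := hg.integrable_comp hp ((hu_mem k).sub hv)
  have hw_bound (k : ι) : eLpNorm (u k - v) p μ ≤ LpAddConst p * (C + eLpNorm v p μ) :=
    (eLpNorm_sub_le' (hu k) hv.1 p).trans (by gcongr; exact hbound k)
  have hw_bound_ne_top : LpAddConst p * (C + eLpNorm v p μ) ≠ ∞ :=
    mul_ne_top (LpAddConst_lt_top p).ne (add_ne_top.2 ⟨hC, hv.eLpNorm_ne_top⟩)
  have hw_lim : ∀ᵐ x ∂μ, Tendsto (fun k => (u k - v) x) l (𝓝 0) := by
    filter_upwards [hlim] with x hx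
    simpa using hx.sub_const (v x)
  have hremainder := hg.tendsto_lintegral_enorm_remainder hp (fun k => (hu k).sub hv.1)
    hw_bound_ne_top hw_bound hv hw_lim
  have hL1 := tendsto_integral_of_L1 (fun x => g (v x)) (hg.integrable_comp hp hv).1
    (.of_forall fun k => (hgu k).sub (hgw k)) (by simpa using hremainder)
  exact hL1.congr fun k => integral_sub (hgu k) (hgw k)

end BrezisLiebGrowth

theorem brezisLiebGrowth_mul_self_of_abs_deriv_le {p : ℝ≥0} (hp : 2 ≤ p) {f : ℝ → ℝ}
    (hf : Differentiable ℝ f) (hf0 : f 0 = 0) {A : ℝ}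
    (hderiv : ∀ s, |deriv f s| ≤ A * |s| ^ ((p : ℝ) - 2)) :
    BrezisLiebGrowth p fun s => f s * s := by
  obtain ⟨q, rfl⟩ : ∃ q : ℝ≥0, p = q + 1 + 1 := ⟨p - 2, by
    rw [add_assoc, one_add_one_eq_two, tsub_add_cancel_of_le hp]⟩
  have hfderiv (s : ℝ) : ‖fderiv ℝ f s‖ ≤ A.toNNReal * ‖s‖ ^ (q : ℝ) := by
    have hexp : ((q + 1 + 1 : ℝ≥0) : ℝ) - 2 = q := by push_cast; ring
    rw [← norm_deriv_eq_norm_fderiv, Real.norm_eq_abs, Real.norm_eq_abs, ← hexp]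
    exact (hderiv s).trans (by gcongr; exact A.le_coe_toNNReal)
  exact ((LipschitzWithPowerGrowth.of_norm_fderiv_le hf hfderiv).mul_self hf0).brezisLiebGrowth
    (by simp)

theorem brezis_lieb_f_general {α ι : Type*} [MeasurableSpace α] {μ : Measure α} {l : Filter ι}
    [l.NeBot] [l.IsCountablyGenerated] {p : ℝ} (hp : 2 ≤ p) {f : ℝ → ℝ}
    (hf : Differentiable ℝ f) (hf0 : f 0 = 0) {A : ℝ}
    (hderiv : ∀ s, |deriv f s| ≤ A * |s| ^ (p - 2)) {u : ι → α → ℝ} {v : α → ℝ}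
    (hu : ∀ k, AEStronglyMeasurable (u k) μ)
    (hlim : ∀ᵐ x ∂μ, Tendsto (fun k => u k x) l (𝓝 (v x))) {C : ℝ≥0∞} (hC : C ≠ ∞)
    (hbound : ∀ k, ∫⁻ x, ENNReal.ofReal (|u k x| ^ p) ∂μ ≤ C) :
    (∀ k, Integrable (fun x => f (u k x) * u k x) μ ∧
      Integrable (fun x => f (u k x - v x) * (u k x - v x)) μ) ∧
    Integrable (fun x => f (v x) * v x) μ ∧
    Tendsto (fun k => ∫ x, f (u k x) * u k x ∂μ - ∫ x, f (u k x - v x) * (u k x - v x) ∂μ)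
      l (𝓝 (∫ x, f (v x) * v x ∂μ)) := by
  lift p to ℝ≥0 using by linarith
  have hp0 : p ≠ 0 := (two_pos.trans_le (by exact_mod_cast hp : (2 : ℝ≥0) ≤ p)).ne'
  have hg : BrezisLiebGrowth p fun s => f s * s :=
    brezisLiebGrowth_mul_self_of_abs_deriv_le (by exact_mod_cast hp) hf hf0 hderiv
  have hC' : C ^ (1 / (p : ℝ)) ≠ ∞ := rpow_ne_top_of_nonneg (by positivity) hC
  have hu_le (k : ι) : eLpNorm (u k) p μ ≤ C ^ (1 / (p : ℝ)) := by
    rw [eLpNorm_nnreal_eq_lintegral_ofReal hp0]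
    exact rpow_le_rpow (hbound k) (by positivity)
  have hu_mem (k : ι) : MemLp (u k) p μ := ⟨hu k, (hu_le k).trans_lt hC'.lt_top⟩
  have hv_mem : MemLp v p μ := ⟨aestronglyMeasurable_of_tendsto_ae l hu hlim,
    (Lp.eLpNorm_le_of_ae_tendsto (.of_forall hu_le) hu hlim).trans_lt hC'.lt_top⟩
  exact ⟨fun k => ⟨hg.integrable_comp hp0 (hu_mem k),
    hg.integrable_comp hp0 ((hu_mem k).sub hv_mem)⟩, hg.integrable_comp hp0 hv_mem,
    hg.tendsto_integral_comp_sub hp0 hu hC' hu_le hv_mem hlim⟩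

/-- **Lemma 3.2(c) (Brezis–Lieb type).** If `f ∈ C¹(ℝ)` with `f(0) = 0` and
`|f'(s)| ≤ A₁|s|^{2*−2}`, `u_k → u` a.e. and `sup_k ∫|u_k|^{2*} < ∞`, then
`∫ f(u_k)u_k − ∫ f(u_k−u)(u_k−u) → ∫ f(u)u`, all the integrals being finite.
Here `2* = 2N/(N−2)`. -/
theorem brezis_lieb_f
    (N : ℕ) (hN : 3 ≤ N)
    (f : ℝ → ℝ) (hC1 : ContDiff ℝ 1 f) (hf0 : f 0 = 0)
    (A₁ : ℝ) (hA₁ : 0 < A₁)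
    (hd : ∀ s : ℝ, |deriv f s| ≤ A₁ * |s| ^ (2 * (N : ℝ) / ((N : ℝ) - 2) - 2))
    (u : ℕ → EuclideanSpace ℝ (Fin N) → ℝ) (v : EuclideanSpace ℝ (Fin N) → ℝ)
    (hmeas : ∀ k, Measurable (u k)) (hvmeas : Measurable v)
    (hae : ∀ᵐ x : EuclideanSpace ℝ (Fin N), Tendsto (fun k => u k x) atTop (nhds (v x)))
    (C : ℝ≥0∞) (hC : C ≠ ⊤)
    (hbd : ∀ k, (∫⁻ x : EuclideanSpace ℝ (Fin N),
        ENNReal.ofReal (|u k x| ^ (2 * (N : ℝ) / ((N : ℝ) - 2)))) ≤ C) :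
    (∀ k, Integrable (fun x : EuclideanSpace ℝ (Fin N) => f (u k x) * u k x) ∧
      Integrable (fun x : EuclideanSpace ℝ (Fin N) => f (u k x - v x) * (u k x - v x))) ∧
    Integrable (fun x : EuclideanSpace ℝ (Fin N) => f (v x) * v x) ∧
    Tendsto (fun k =>
        (∫ x : EuclideanSpace ℝ (Fin N), f (u k x) * u k x) -
          ∫ x : EuclideanSpace ℝ (Fin N), f (u k x - v x) * (u k x - v x))
      atTop (nhds (∫ x : EuclideanSpace ℝ (Fin N), f (v x) * v x)) := by
  have hN' : (2 : ℝ) < N := by exact_mod_cast hN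
  have hp : 2 ≤ 2 * (N : ℝ) / (N - 2) := (le_div_iff₀ (by linarith)).2 (by linarith)
  exact brezis_lieb_f_general hp (hC1.differentiable one_ne_zero) hf0 hd
    (fun k => (hmeas k).aestronglyMeasurable) hae hC hbd
end
end
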